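/- Let W be an m×k random matrix distributed according to the SUO distribution, let φ : ℝ → ℝ satisfy ‖φ‖_∞ ≤ C and ‖φ'‖_∞ ≤ C, and let z, z' ∈ ℝ^k satisfy ‖z‖² = ‖z'‖² = k. Then for n = max(k, m) ≥ 2, |E[κ_f(z, z')] − κ̃_f(Σ_{z,z'})| ≤ 4√2 √m C²/(n−1). -/

import Mathlib

open MeasureTheory ProbabilityTheory Matrix Kronecker
open scoped ENNReal NNReal

noncomputable section

instance {m n : Type*} : MeasurableSpace (Matrix m n ℝ) :=
  show MeasurableSpace (m → n → ℝ) from inferInstance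

/-- `μ` is the Haar probability measure on the group `O(n)` of `n × n` real orthogonal
matrices: it is a probability measure, it is supported on orthogonal matrices, and it is
invariant under (left) translation by any orthogonal matrix. -/
def IsHaarO (n : ℕ) (μ : Measure (Matrix (Fin n) (Fin n) ℝ)) : Prop :=
  IsProbabilityMeasure μ ∧
  (∀ᵐ M ∂μ, Mᵀ * M = 1) ∧
  ∀ Q : Matrix (Fin n) (Fin n) ℝ, Qᵀ * Q = 1 → μ.map (fun M => Q * M) = μ

/-- `μ` is the Haar probability measure on `SO(n)`: a probability measure supported on
orthogonal matrices of determinant one, invariant under left translation by `SO(n)`. -/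
def IsHaarSO (n : ℕ) (μ : Measure (Matrix (Fin n) (Fin n) ℝ)) : Prop :=
  IsProbabilityMeasure μ ∧
  (∀ᵐ M ∂μ, Mᵀ * M = 1 ∧ M.det = 1) ∧
  ∀ Q : Matrix (Fin n) (Fin n) ℝ, Qᵀ * Q = 1 → Q.det = 1 →
    μ.map (fun M => Q * M) = μ

/-- The map taking an `n × n` matrix to `√(n/k)` times its top-left `m × k` submatrix. -/
def suoOfHaar {m k n : ℕ} (hm : m ≤ n) (hk : k ≤ n)
    (M : Matrix (Fin n) (Fin n) ℝ) : Matrix (Fin m) (Fin k) ℝ :=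
  Real.sqrt ((n : ℝ) / (k : ℝ)) • M.submatrix (Fin.castLE hm) (Fin.castLE hk)

/-- `ν` is the scaled-corrected uniform orthogonal (SUO) distribution on `m × k` matrices:
the law of `√(n/k) • W₀` where `n = max k m` and `W₀` is the top-left `m × k` submatrix of
a Haar-distributed `n × n` orthogonal matrix. -/
def IsSUO (m k : ℕ) (ν : Measure (Matrix (Fin m) (Fin k) ℝ)) : Prop :=
  ∃ μ : Measure (Matrix (Fin (max k m)) (Fin (max k m)) ℝ),
    IsHaarO (max k m) μ ∧
    ν = μ.map (suoOfHaar (le_max_right k m) (le_max_left k m))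

/-- The kernel function `κ_f(z, z') = (1/m) f(z)ᵀ f(z')` of the combined layer
`f(z) = φ(W z)`, with `φ` applied elementwise. -/
def kernelF {m k : ℕ} (φ : ℝ → ℝ) (W : Matrix (Fin m) (Fin k) ℝ)
    (z z' : Fin k → ℝ) : ℝ :=
  (∑ i, φ (W.mulVec z i) * φ (W.mulVec z' i)) / (m : ℝ)

/-- The input covariance matrix `Σ_{z,z'} = (1/k) [[zᵀz, zᵀz'], [z'ᵀz, z'ᵀz']]`. -/
def covMat {k : ℕ} (z z' : Fin k → ℝ) : Matrix (Fin 2) (Fin 2) ℝ :=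
  (k : ℝ)⁻¹ • !![z ⬝ᵥ z, z ⬝ᵥ z'; z' ⬝ᵥ z, z' ⬝ᵥ z']

/-- The approximate kernel function `κ̃_f(Σ) = E_{u ∼ N(0, Σ)}[φ(u₁) φ(u₂)]`, realized by
pushing a pair of independent standard Gaussians through the Cholesky factor of `Σ`. -/
def approxKernel (φ : ℝ → ℝ) (S : Matrix (Fin 2) (Fin 2) ℝ) : ℝ :=
  ∫ p : ℝ × ℝ,
      φ (Real.sqrt (S 0 0) * p.1) *
      φ ((S 1 0 / Real.sqrt (S 0 0)) * p.1 +
          Real.sqrt (S 1 1 - (S 1 0) ^ 2 / S 0 0) * p.2)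
    ∂((gaussianReal 0 1).prod (gaussianReal 0 1))

/-- `γ` is the law of a centered (jointly) Gaussian random vector indexed by `ι` with
covariance matrix `A`: every linear functional of it is a centered real Gaussian with the
corresponding variance. -/
def IsGaussianLaw {ι : Type*} [Fintype ι] (A : Matrix ι ι ℝ)
    (γ : Measure (ι → ℝ)) : Prop :=
  IsProbabilityMeasure γ ∧
  ∀ l : ι → ℝ,
    γ.map (fun y => ∑ i, l i * y i) =
      gaussianReal 0 (Real.toNNReal (∑ i, ∑ j, l i * A i j * l j))

/-- The Frobenius (Hilbert–Schmidt) norm of a matrix. -/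
def frobNorm {m n : ℕ} (M : Matrix (Fin m) (Fin n) ℝ) : ℝ :=
  Real.sqrt (∑ i, ∑ j, (M i j) ^ 2)

/-- The `ℓ²` operator norm of a square matrix. -/
def opNorm {d : ℕ} (A : Matrix (Fin d) (Fin d) ℝ) : ℝ :=
  ‖Matrix.toEuclideanCLM (𝕜 := ℝ) A‖

end

noncomputable section


lemma aux_ftc (H : ℝ → ℝ) (hH : Differentiable ℝ H) (L : ℝ) (hL : ∀ s, |deriv H s| ≤ L)
    (x : ℝ) (hx : 0 ≤ x) :
    H x = H 0 + ∫ s in Set.Ioi (0:ℝ), (Set.Iio x).indicator (fun s => deriv H s) s := by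
  have h1 : IntervalIntegrable (deriv H) volume 0 x := by
    rw [intervalIntegrable_iff]
    refine Measure.integrableOn_of_bounded (M := L) (by simp) (measurable_deriv H).aestronglyMeasurable ?_
    exact Filter.Eventually.of_forall (fun s => by simpa using hL s)
  have h2 := intervalIntegral.integral_eq_sub_of_hasDerivAt
    (fun s _ => (hH s).hasDerivAt) h1
  rw [intervalIntegral.integral_of_le hx, integral_Ioc_eq_integral_Ioo] at h2
  rw [setIntegral_indicator measurableSet_Iio, Set.Ioi_inter_Iio]
  linarith

lemma tail_formula {Ω : Type*} [MeasurableSpace Ω] (P : Measure Ω) [IsProbabilityMeasure P]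
    (X : Ω → ℝ) (hX : Measurable X) (h0 : ∀ᵐ ω ∂P, 0 ≤ X ω) (hi : Integrable X P)
    (H : ℝ → ℝ) (hH : Differentiable ℝ H) (L : ℝ) (hL : ∀ s, |deriv H s| ≤ L) :
    ∫ ω, H (X ω) ∂P = H 0 + ∫ s in Set.Ioi (0:ℝ), deriv H s * P.real {ω | s < X ω} := by
  have hL0 : 0 ≤ L := (abs_nonneg _).trans (hL 0)
  set F : Ω → ℝ → ℝ := fun ω s => (Set.Iio (X ω)).indicator (fun s => deriv H s) s with hF
  have hms : MeasurableSet {p : Ω × ℝ | p.2 < X p.1} :=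
    measurableSet_lt measurable_snd (hX.comp measurable_fst)
  have hFm : Measurable (Function.uncurry F) := by
    have : Function.uncurry F =
        {p : Ω × ℝ | p.2 < X p.1}.indicator (fun p => deriv H p.2) := by
      ext p
      simp [hF, Function.uncurry, Set.indicator]
    rw [this]
    exact ((measurable_deriv H).comp measurable_snd).indicator hms
  have hFi : ∀ ω, Integrable (F ω) (volume.restrict (Set.Ioi 0)) := by
    intro ω
    rw [hF]
    simp only
    rw [integrable_indicator_iff measurableSet_Iio, IntegrableOn, Measure.restrict_restrict measurableSet_Iio,
      Set.Iio_inter_Ioi]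
    refine Measure.integrableOn_of_bounded (M := L) (by simp) (measurable_deriv H).aestronglyMeasurable ?_
    exact Filter.Eventually.of_forall (fun s => by simpa using hL s)
  have hint : Integrable (Function.uncurry F) (P.prod (volume.restrict (Set.Ioi 0))) := by
    rw [integrable_prod_iff hFm.aestronglyMeasurable]
    refine ⟨Filter.Eventually.of_forall hFi, ?_⟩
    refine Integrable.mono' (hi.const_mul L) ?_ ?_
    · exact (hFm.norm.stronglyMeasurable.integral_prod_right).aestronglyMeasurable
    · filter_upwards [h0] with ω hω
      rw [Real.norm_of_nonneg (integral_nonneg (fun _ => norm_nonneg _))]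
      calc ∫ s in Set.Ioi 0, ‖Function.uncurry F (ω, s)‖
          ≤ ∫ s in Set.Ioi 0, (Set.Iio (X ω)).indicator (fun _ => L) s := by
            refine integral_mono (hFi ω).norm ?_ ?_
            · rw [integrable_indicator_iff measurableSet_Iio, IntegrableOn, Measure.restrict_restrict measurableSet_Iio,
                Set.Iio_inter_Ioi]
              exact integrableOn_const (by simp)
            · intro s
              simp only [Function.uncurry, hF, Set.indicator]
              split_ifs
              · exact hL s
              · simp
        _ = L * X ω := by
            rw [setIntegral_indicator measurableSet_Iio, Set.Ioi_inter_Iio]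
            simp [hω, mul_comm]
  have e1 : ∫ ω, H (X ω) ∂P = ∫ ω, (H 0 + ∫ s in Set.Ioi (0:ℝ), F ω s) ∂P := by
    refine integral_congr_ae ?_
    filter_upwards [h0] with ω hω
    exact aux_ftc H hH L hL _ hω
  have hint2 : Integrable (fun ω => ∫ s in Set.Ioi (0:ℝ), F ω s) P := hint.integral_prod_left
  rw [e1, integral_add (integrable_const _) hint2, integral_integral_swap hint]
  simp only [integral_const, probReal_univ, smul_eq_mul, one_mul]
  congr 1
  refine integral_congr_ae (Filter.Eventually.of_forall fun s => ?_)
  simp only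
  have : (fun ω => F ω s) = {ω | s < X ω}.indicator (fun _ => deriv H s) := by
    ext ω; simp [hF, Set.indicator]
  rw [this, integral_indicator_const _ (measurableSet_lt measurable_const hX), smul_eq_mul, mul_comm]

lemma w1_bound {Ω Ω' : Type*} [MeasurableSpace Ω] [MeasurableSpace Ω']
    (P : Measure Ω) [IsProbabilityMeasure P] (Q : Measure Ω') [IsProbabilityMeasure Q]
    (X : Ω → ℝ) (hX : Measurable X) (h0 : ∀ᵐ ω ∂P, 0 ≤ X ω) (hi : Integrable X P)
    (Y : Ω' → ℝ) (hY : Measurable Y) (h0' : ∀ᵐ ω ∂Q, 0 ≤ Y ω) (hi' : Integrable Y Q)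
    (T1 T2 D : ℝ → ℝ)
    (hT1 : ∀ s, 0 < s → P.real {ω | s < X ω} = T1 s)
    (hT2 : ∀ s, 0 < s → Q.real {ω | s < Y ω} = T2 s)
    (iT1 : IntegrableOn T1 (Set.Ioi 0)) (iT2 : IntegrableOn T2 (Set.Ioi 0))
    (iD : IntegrableOn D (Set.Ioi 0)) (hD : ∀ s, 0 < s → |T1 s - T2 s| ≤ D s)
    (H : ℝ → ℝ) (hH : Differentiable ℝ H) (L : ℝ) (hL : ∀ s, |deriv H s| ≤ L) :
    |∫ ω, H (X ω) ∂P - ∫ ω, H (Y ω) ∂Q| ≤ L * ∫ s in Set.Ioi (0:ℝ), D s := by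
  rw [tail_formula P X hX h0 hi H hH L hL, tail_formula Q Y hY h0' hi' H hH L hL]
  have k1 : ∫ s in Set.Ioi (0:ℝ), deriv H s * P.real {ω | s < X ω} =
      ∫ s in Set.Ioi (0:ℝ), deriv H s * T1 s :=
    setIntegral_congr_fun measurableSet_Ioi (fun s hs => by rw [hT1 s hs])
  have k2 : ∫ s in Set.Ioi (0:ℝ), deriv H s * Q.real {ω | s < Y ω} =
      ∫ s in Set.Ioi (0:ℝ), deriv H s * T2 s :=
    setIntegral_congr_fun measurableSet_Ioi (fun s hs => by rw [hT2 s hs])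
  rw [k1, k2]
  have j1 : IntegrableOn (fun s => deriv H s * T1 s) (Set.Ioi 0) :=
    Integrable.bdd_mul iT1 (measurable_deriv H).aestronglyMeasurable
      (Filter.Eventually.of_forall (fun s => by simpa using hL s))
  have j2 : IntegrableOn (fun s => deriv H s * T2 s) (Set.Ioi 0) :=
    Integrable.bdd_mul iT2 (measurable_deriv H).aestronglyMeasurable
      (Filter.Eventually.of_forall (fun s => by simpa using hL s))
  rw [add_sub_add_left_eq_sub, ← integral_sub j1 j2, ← integral_const_mul]
  rw [← Real.norm_eq_abs]
  refine norm_integral_le_of_norm_le (iD.const_mul L) ?_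
  refine (ae_restrict_iff' measurableSet_Ioi).2 (Filter.Eventually.of_forall fun s hs => ?_)
  rw [← mul_sub, Real.norm_eq_abs, abs_mul]
  exact mul_le_mul (hL s) (hD s hs) (abs_nonneg _) ((abs_nonneg _).trans (hL 0))

/-- Rayleigh law -/
def rayl : Measure ℝ :=
  (volume.restrict (Set.Ioi 0)).withDensity (fun r => ENNReal.ofReal (r * Real.exp (-r ^ 2 / 2)))

lemma rayl_int (c : ℝ) (hc : 0 ≤ c) :
    IntegrableOn (fun r => r * Real.exp (-r ^ 2 / 2)) (Set.Ioi c) ∧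
    ∫ r in Set.Ioi c, r * Real.exp (-r ^ 2 / 2) = Real.exp (-c ^ 2 / 2) := by
  have hd : ∀ x ∈ Set.Ici c, HasDerivAt (fun r : ℝ => - Real.exp (-r ^ 2 / 2))
      (x * Real.exp (-x ^ 2 / 2)) x := by
    intro x _
    have := ((((hasDerivAt_id x).pow 2).neg.div_const 2).exp).neg
    have e : x * Real.exp (-x ^ 2 / 2) = -(Real.exp ((-id ^ 2) x / 2) * (-(((2:ℕ):ℝ) * id x ^ (2 - 1) * 1) / 2)) := by
      simp
      ring
    rw [e]
    exact this
  have ht : Filter.Tendsto (fun r : ℝ => - Real.exp (-r ^ 2 / 2)) Filter.atTop (nhds 0) := by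
    rw [← neg_zero]
    refine Filter.Tendsto.neg (Real.tendsto_exp_atBot.comp ?_)
    have : Filter.Tendsto (fun r : ℝ => r ^ 2 / 2) Filter.atTop Filter.atTop :=
      (Filter.tendsto_pow_atTop two_ne_zero).atTop_div_const two_pos
    convert Filter.tendsto_neg_atTop_atBot.comp this using 1
    ext; simp; ring
  have hi := integrableOn_Ioi_deriv_of_nonneg' hd
    (fun x hx => mul_nonneg (hc.trans (le_of_lt hx)) (Real.exp_pos _).le) ht
  refine ⟨hi, ?_⟩
  rw [integral_Ioi_of_hasDerivAt_of_tendsto' hd hi ht]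
  simp

lemma rayl_Ioi (c : ℝ) (hc : 0 ≤ c) :
    rayl (Set.Ioi c) = ENNReal.ofReal (Real.exp (-c ^ 2 / 2)) := by
  rw [rayl, withDensity_apply _ measurableSet_Ioi, Measure.restrict_restrict measurableSet_Ioi,
    Set.Ioi_inter_Ioi, sup_of_le_left hc, ← (rayl_int c hc).2,
    ofReal_integral_eq_lintegral_ofReal (rayl_int c hc).1]
  refine (ae_restrict_iff' measurableSet_Ioi).2 (Filter.Eventually.of_forall fun r hr => ?_)
  exact mul_nonneg (hc.trans (le_of_lt hr)) (Real.exp_pos _).le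

lemma rayl_pos : ∀ᵐ r ∂rayl, 0 < r :=
  (withDensity_absolutelyContinuous _ _).ae_le (ae_restrict_mem measurableSet_Ioi)

instance : IsProbabilityMeasure rayl := by
  constructor
  have : rayl (Set.Ioi 0) = 1 := by rw [rayl_Ioi 0 le_rfl]; simp
  rw [← this]
  refine measure_congr ?_
  filter_upwards [rayl_pos] with r hr
  exact propext ⟨fun _ => hr, fun _ => trivial⟩

lemma rayl_integrable : Integrable (fun r => r) rayl := by
  rw [rayl, integrable_withDensity_iff_integrable_smul₀' (by fun_prop) (by simp)]
  have h := integrable_rpow_mul_exp_neg_mul_sq (b := 1/2) (by norm_num) (s := 2) (by norm_num)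
  refine Integrable.congr (h.integrableOn (s := Set.Ioi 0)) ?_
  refine (ae_restrict_iff' measurableSet_Ioi).2 (Filter.Eventually.of_forall fun r hr => ?_)
  have hr : 0 < r := hr
  simp only [smul_eq_mul]
  rw [ENNReal.toReal_ofReal (mul_nonneg hr.le (Real.exp_pos _).le), Real.rpow_two]
  ring_nf

/-- uniform angle -/
def unif : Measure ℝ :=
  (volume.restrict (Set.Ioo (-Real.pi) Real.pi)).withDensity (fun _ => ENNReal.ofReal ((2 * Real.pi)⁻¹))

instance : IsProbabilityMeasure unif := by
  constructor
  rw [unif, withDensity_const]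
  simp only [Measure.smul_apply, Measure.restrict_apply MeasurableSet.univ, Set.univ_inter,
    Real.volume_Ioo, smul_eq_mul]
  rw [← ENNReal.ofReal_mul (by positivity), ENNReal.ofReal_eq_one]
  field_simp
  ring

lemma unif_integral (f : ℝ → ℝ) : ∫ t, f t ∂unif = (2 * Real.pi)⁻¹ * ∫ t in (-Real.pi)..Real.pi, f t := by
  rw [unif, withDensity_const, integral_smul_measure, intervalIntegral.integral_of_le (by linarith [Real.pi_pos]),
    integral_Ioc_eq_integral_Ioo, ENNReal.toReal_ofReal (by positivity), smul_eq_mul]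

lemma polar_eq : (gaussianReal 0 1).prod (gaussianReal 0 1) =
    (unif.prod rayl).map (fun p : ℝ × ℝ => (p.2 * Real.cos p.1, p.2 * Real.sin p.1)) := by
  refine Measure.ext_of_lintegral _ fun f hf => ?_
  rw [lintegral_map hf (by fun_prop), ← lintegral_prod_swap (μ := unif) (ν := rayl), rayl, unif,
    prod_withDensity (by fun_prop) (by fun_prop), Measure.prod_restrict,
    gaussianReal_of_var_ne_zero _ one_ne_zero,
    prod_withDensity (by fun_prop) (by fun_prop), lintegral_withDensity_eq_lintegral_mul _ (by fun_prop) hf,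
    lintegral_withDensity_eq_lintegral_mul _ (by fun_prop) (by fun_prop)]
  rw [← Measure.volume_eq_prod, ← lintegral_comp_polarCoord_symm]
  rw [polarCoord_target]
  refine setLIntegral_congr_fun (measurableSet_Ioi.prod measurableSet_Ioo) fun p hp => ?_
  have hp1 : 0 < p.1 := hp.1
  simp only [Pi.mul_apply, polarCoord_symm_apply, Prod.swap, smul_eq_mul, ← mul_assoc]
  congr 1
  simp only [gaussianPDF, gaussianPDFReal]
  rw [← ENNReal.ofReal_mul (by positivity), ← ENNReal.ofReal_mul (by positivity), mul_assoc,
    ← ENNReal.ofReal_mul (by positivity)]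
  congr 1
  have h : Real.exp (-(p.1) ^ 2 / 2) = Real.exp (-(p.1 * Real.cos p.2 - 0) ^ 2 / (2 * ((1:ℝ≥0):ℝ))) *
      Real.exp (-(p.1 * Real.sin p.2 - 0) ^ 2 / (2 * ((1:ℝ≥0):ℝ))) := by
    rw [← Real.exp_add]
    congr 1
    have := Real.sin_sq_add_cos_sq p.2
    simp
    linear_combination (p.1^2/2) * this
  rw [h]
  have h3 : (√(2 * Real.pi * ((1:ℝ≥0):ℝ)))⁻¹ * (√(2 * Real.pi * ((1:ℝ≥0):ℝ)))⁻¹ = (2 * Real.pi)⁻¹ := by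
    rw [← mul_inv, Real.mul_self_sqrt (by positivity)]; simp
  rw [← h3]
  ring


lemma tail_set (n b s : ℝ) (hb : 0 ≤ b) (hs : 0 < s) (hsn : s ^ 2 < n) :
    {r : ℝ | s < √n * r / √(r ^ 2 + b)} = Set.Ioi (s * √b / √(n - s ^ 2)) := by
  ext r
  simp only [Set.mem_ofPred_eq, Set.mem_Ioi]
  have hd : 0 < √(n - s ^ 2) := Real.sqrt_pos.2 (by linarith)
  rcases le_or_gt r 0 with hr | hr
  · constructor
    · intro h
      have : √n * r / √(r ^ 2 + b) ≤ 0 :=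
        div_nonpos_of_nonpos_of_nonneg (mul_nonpos_of_nonneg_of_nonpos (Real.sqrt_nonneg _) hr)
          (Real.sqrt_nonneg _)
      linarith
    · intro h
      have : 0 ≤ s * √b / √(n - s ^ 2) := by positivity
      linarith
  · have h1 : 0 < √(r ^ 2 + b) := Real.sqrt_pos.2 (by positivity)
    rw [lt_div_iff₀ h1, div_lt_iff₀ hd]
    have hn : 0 ≤ n := (sq_nonneg s).trans hsn.le
    rw [← pow_lt_pow_iff_left₀ (by positivity) (by positivity) two_ne_zero,
      ← pow_lt_pow_iff_left₀ (a := s * √b) (by positivity) (by positivity) two_ne_zero]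
    simp only [mul_pow]
    rw [Real.sq_sqrt (by positivity), Real.sq_sqrt hn, Real.sq_sqrt hb, Real.sq_sqrt (by linarith)]
    constructor <;> intro h <;> nlinarith

lemma X_le (n b r : ℝ) (hb : 0 ≤ b) : √n * r / √(r ^ 2 + b) ≤ √n := by
  rw [mul_div_assoc]
  refine mul_le_of_le_one_right (Real.sqrt_nonneg _) ?_
  refine div_le_one_of_le₀ ?_ (Real.sqrt_nonneg _)
  exact Real.le_sqrt_of_sq_le (by linarith)

lemma gauss_lap (l : ℝ) (hl : 0 ≤ l) :
    ∫ x, Real.exp (-(l * x ^ 2) / 2) ∂(gaussianReal 0 1) = (√(1 + l))⁻¹ := by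
  rw [integral_gaussianReal_eq_integral_smul one_ne_zero]
  have : ∀ x : ℝ, gaussianPDFReal 0 1 x • Real.exp (-(l * x ^ 2) / 2) =
      (√(2 * Real.pi))⁻¹ * Real.exp (-((1 + l) / 2) * x ^ 2) := by
    intro x
    simp only [gaussianPDFReal, smul_eq_mul, mul_assoc, ← Real.exp_add]
    simp
    ring_nf
    simp
  simp_rw [this]
  rw [integral_const_mul, integral_gaussian]
  have hp := Real.pi_pos
  rw [← Real.sqrt_inv, ← Real.sqrt_inv, ← Real.sqrt_mul (by positivity)]
  congr 1
  field_simp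

lemma tail_X (N : ℕ) (hN : N ≠ 0) (n s : ℝ) (hn : 0 < n) (hs : 0 < s) :
    (rayl.prod (Measure.pi (fun _ : Fin N => gaussianReal 0 1))).real
      {q : ℝ × (Fin N → ℝ) | s < √n * q.1 / √(q.1 ^ 2 + ∑ j, q.2 j ^ 2)} = √(1 - s ^ 2 / n) ^ N := by
  have hb : ∀ g : Fin N → ℝ, 0 ≤ ∑ j, g j ^ 2 := fun g => Finset.sum_nonneg fun _ _ => sq_nonneg _
  rcases le_or_gt n (s ^ 2) with h | h
  · have h1 : {q : ℝ × (Fin N → ℝ) | s < √n * q.1 / √(q.1 ^ 2 + ∑ j, q.2 j ^ 2)} = ∅ := by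
      ext q
      simp only [Set.mem_ofPred_eq, Set.mem_empty_iff_false, iff_false, not_lt]
      exact (X_le n _ _ (hb q.2)).trans (Real.sqrt_le_iff.2 ⟨hs.le, h⟩)
    have h2 : √(1 - s ^ 2 / n) = 0 := by
      apply Real.sqrt_eq_zero_of_nonpos
      rw [sub_nonpos, le_div_iff₀ hn]; linarith
    rw [h1, h2, zero_pow hN]; simp
  · have hms : MeasurableSet {q : ℝ × (Fin N → ℝ) | s < √n * q.1 / √(q.1 ^ 2 + ∑ j, q.2 j ^ 2)} :=
      measurableSet_lt measurable_const (by fun_prop)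
    have hnp : 0 < n - s ^ 2 := by linarith
    rw [Measure.real, Measure.prod_apply_symm hms]
    have e1 : ∀ g : Fin N → ℝ, rayl ((fun x => (x, g)) ⁻¹'
        {q : ℝ × (Fin N → ℝ) | s < √n * q.1 / √(q.1 ^ 2 + ∑ j, q.2 j ^ 2)}) =
        ENNReal.ofReal (∏ j, Real.exp (-(s ^ 2 / (n - s ^ 2) * g j ^ 2) / 2)) := by
      intro g
      have := tail_set n (∑ j, g j ^ 2) s (hb g) hs h
      simp only [Set.preimage_ofPred_eq]
      rw [this, rayl_Ioi _ (by positivity)]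
      congr 1
      rw [← Real.exp_sum]
      congr 1
      rw [div_pow, mul_pow, Real.sq_sqrt (hb g), Real.sq_sqrt hnp.le, ← Finset.sum_div,
        Finset.sum_neg_distrib, ← Finset.mul_sum]
      ring
    simp_rw [e1]
    rw [← integral_eq_lintegral_of_nonneg_ae]
    · rw [integral_fintype_prod_eq_pow (fun x => Real.exp (-(s ^ 2 / (n - s ^ 2) * x ^ 2) / 2)), gauss_lap _ (by positivity)]
      simp only [Fintype.card_fin]
      congr 1
      rw [← Real.sqrt_inv]
      congr 1
      field_simp
      ring
    · exact Filter.Eventually.of_forall fun g => Finset.prod_nonneg fun _ _ => (Real.exp_pos _).le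
    · exact (Measurable.aestronglyMeasurable (by fun_prop))

lemma tail_Y (s : ℝ) (hs : 0 < s) : rayl.real {r | s < r} = Real.exp (-s ^ 2 / 2) := by
  have := rayl_Ioi s hs.le
  rw [Measure.real, show {r | s < r} = Set.Ioi s from rfl, this, ENNReal.toReal_ofReal (Real.exp_pos _).le]

/-- dominating function -/
def Dfun (n : ℝ) (s : ℝ) : ℝ :=
  (Real.exp (-((n - 2) / (2 * n)) * s ^ 2) - Real.exp (-(1 / 2) * s ^ 2)) +
    1 / (2 * n) * (s ^ (4:ℝ) * Real.exp (-(1 / 2) * s ^ 2))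

lemma T1_le (N : ℕ) (n s : ℝ) (hn : n = N + 2) :
    √(1 - s ^ 2 / n) ^ N ≤ Real.exp (-((n - 2) / (2 * n)) * s ^ 2) := by
  have hn0 : 0 < n := by rw [hn]; positivity
  have h1 : √(1 - s ^ 2 / n) ≤ Real.exp (-(s ^ 2 / n) / 2) := by
    rw [Real.exp_half]
    apply Real.sqrt_le_sqrt
    have := Real.add_one_le_exp (-(s ^ 2 / n))
    linarith
  refine (pow_le_pow_left₀ (Real.sqrt_nonneg _) h1 N).trans (le_of_eq ?_)
  rw [← Real.exp_nat_mul]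
  congr 1
  have : (N : ℝ) = n - 2 := by rw [hn]; ring
  rw [this]
  field_simp

lemma D_bound (N : ℕ) (n s : ℝ) (hn : n = N + 2) (hs : 0 < s) :
    |√(1 - s ^ 2 / n) ^ N - Real.exp (-s ^ 2 / 2)| ≤ Dfun n s := by
  have hn2 : 2 ≤ n := by rw [hn]; linarith [(Nat.cast_nonneg N : (0:ℝ) ≤ N)]
  have hn0 : 0 < n := by linarith
  have hE : Real.exp (-s ^ 2 / 2) = Real.exp (-(1 / 2) * s ^ 2) := by ring_nf
  rw [hE, Dfun]
  have hs4 : s ^ (4:ℝ) = s ^ 4 := by exact_mod_cast Real.rpow_natCast s 4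
  rw [hs4]
  have hU : Real.exp (-(1 / 2) * s ^ 2) ≤ Real.exp (-((n - 2) / (2 * n)) * s ^ 2) := by
    apply Real.exp_le_exp.2
    have : (n - 2) / (2 * n) ≤ 1 / 2 := by
      rw [div_le_div_iff₀ (by positivity) (by positivity)]; linarith
    nlinarith [sq_nonneg s]
  have hV : Real.exp (-(1 / 2) * s ^ 2) - √(1 - s ^ 2 / n) ^ N ≤
      1 / (2 * n) * (s ^ 4 * Real.exp (-(1 / 2) * s ^ 2)) := by
    rcases le_or_gt n (s ^ 2) with h | h
    · have h1 : (1:ℝ) ≤ 1 / (2 * n) * s ^ 4 := by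
        rw [one_div, inv_mul_eq_div, le_div_iff₀ (by positivity)]
        nlinarith
      have h2 := mul_le_mul_of_nonneg_right h1 (Real.exp_pos (-(1 / 2) * s ^ 2)).le
      have : 0 ≤ √(1 - s ^ 2 / n) ^ N := by positivity
      linarith
    · set x := s ^ 2 / n with hx
      have hx0 : 0 ≤ x := by positivity
      have hx1 : x < 1 := by rw [hx, div_lt_one hn0]; exact h
      have a1 : √(1 - x) ^ N = (1 - x) ^ ((N:ℝ) / 2) := by
        rw [Real.sqrt_eq_rpow, ← Real.rpow_mul_natCast (by linarith)]
        congr 1; ring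
      have a2 : (1 - x) ^ (n / 2) ≤ (1 - x) ^ ((N:ℝ) / 2) :=
        Real.rpow_le_rpow_of_exponent_ge (by linarith) (by linarith) (by rw [hn]; linarith)
      have a3 : (1 - x ^ 2) * Real.exp (-x) ≤ 1 - x := by
        have h1 : (1 + x) * Real.exp (-x) ≤ 1 := by
          have := Real.add_one_le_exp x
          calc (1 + x) * Real.exp (-x) ≤ Real.exp x * Real.exp (-x) :=
                mul_le_mul_of_nonneg_right (by linarith) (Real.exp_pos _).le
            _ = 1 := by rw [← Real.exp_add]; simp
        nlinarith
      have hx2 : 0 ≤ 1 - x ^ 2 := by nlinarith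
      have a4 : ((1 - x ^ 2) * Real.exp (-x)) ^ (n / 2) ≤ (1 - x) ^ (n / 2) :=
        Real.rpow_le_rpow (by positivity) a3 (by linarith)
      rw [Real.mul_rpow hx2 (Real.exp_pos _).le, ← Real.exp_mul] at a4
      have a5 : 1 + (n / 2) * (-x ^ 2) ≤ (1 + (-x ^ 2)) ^ (n / 2) :=
        one_add_mul_self_le_rpow_one_add (by linarith) (by linarith)
      have a6 : -x * (n / 2) = -(1 / 2) * s ^ 2 := by rw [hx]; field_simp
      rw [a6] at a4
      have a7 : (n / 2) * (x ^ 2) = 1 / (2 * n) * s ^ 4 := by rw [hx]; field_simp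
      have a8 := mul_le_mul_of_nonneg_right a5 (Real.exp_pos (-(1 / 2) * s ^ 2)).le
      rw [← sub_eq_add_neg] at a8
      have a9 : (1 - 1 / (2 * n) * s ^ 4) * Real.exp (-(1 / 2) * s ^ 2) ≤ √(1 - x) ^ N := by
        rw [← a7, a1]
        calc _ = (1 + (n / 2) * (-x ^ 2)) * Real.exp (-(1 / 2) * s ^ 2) := by ring
          _ ≤ _ := a8
          _ ≤ _ := a4
          _ ≤ _ := a2
      linarith
  have hT := T1_le N n s hn
  have p1 : 0 ≤ 1 / (2 * n) * (s ^ 4 * Real.exp (-(1 / 2) * s ^ 2)) := by positivity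
  rw [abs_le]
  constructor <;> linarith

lemma D_int (n : ℝ) (hn : 3 ≤ n) : IntegrableOn (Dfun n) (Set.Ioi 0) ∧
    ∫ s in Set.Ioi (0:ℝ), Dfun n s ≤ 4 / (n - 1) := by
  have hb : 0 < (n - 2) / (2 * n) := div_pos (by linarith) (by linarith)
  have i1 := (integrable_exp_neg_mul_sq hb).integrableOn (s := Set.Ioi 0)
  have i2 := (integrable_exp_neg_mul_sq (b := 1 / 2) (by norm_num)).integrableOn (s := Set.Ioi 0)
  have i3 := (integrable_rpow_mul_exp_neg_mul_sq (b := 1/2) (by norm_num) (s := 4) (by norm_num)).integrableOn (s := Set.Ioi 0)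
  refine ⟨(i1.sub i2).add (i3.const_mul _), ?_⟩
  have e : ∫ s in Set.Ioi (0:ℝ), Dfun n s =
      (√(Real.pi / ((n - 2) / (2 * n))) / 2 - √(Real.pi / (1 / 2)) / 2) + 1 / (2 * n) *
        ∫ s in Set.Ioi (0:ℝ), s ^ (4:ℝ) * Real.exp (-(1 / 2) * s ^ 2) := by
    unfold Dfun
    rw [← integral_gaussian_Ioi, ← integral_gaussian_Ioi, ← integral_const_mul, ← integral_sub i1 i2]
    exact integral_add (i1.sub i2) (i3.const_mul _)
  have g : ∫ s in Set.Ioi (0:ℝ), s ^ (4:ℝ) * Real.exp (-(1 / 2) * s ^ 2) = 3 * √(Real.pi / 2) := by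
    have := integral_rpow_mul_exp_neg_mul_rpow (p := 2) (q := 4) (b := 1 / 2) (by norm_num) (by norm_num) (by norm_num)
    simp only [Real.rpow_two] at this
    rw [this]
    have h1 : Real.Gamma ((4 + 1) / 2) = 3 / 4 * √Real.pi := by
      rw [show ((4:ℝ) + 1) / 2 = (1 / 2 + 1) + 1 by norm_num, Real.Gamma_add_one (by norm_num),
        Real.Gamma_add_one (by norm_num), Real.Gamma_one_half_eq]
      ring
    have h2 : ((1:ℝ) / 2) ^ (-(4 + 1) / 2 : ℝ) = 4 * √2 := by
      rw [one_div, Real.inv_rpow (by norm_num), ← Real.rpow_neg (by norm_num),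
        show (-(-(4 + 1) / 2) : ℝ) = 2 + 1 / 2 by norm_num, Real.rpow_add (by norm_num), ← Real.sqrt_eq_rpow]
      norm_num
    rw [h1, h2, Real.sqrt_div Real.pi_pos.le]
    have : √2 * √2 = (2:ℝ) := Real.mul_self_sqrt (by norm_num)
    field_simp
    nlinarith
  have h3 : √(Real.pi / ((n - 2) / (2 * n))) ≤ 2 * √(Real.pi / 2) * (1 + 1 / (n - 2)) := by
    have : √(Real.pi / ((n - 2) / (2 * n))) = 2 * √(Real.pi / 2) * √(n / (n - 2)) := by
      rw [show (2:ℝ) * √(Real.pi / 2) = √4 * √(Real.pi / 2) by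
        rw [show (4:ℝ) = 2 ^ 2 by norm_num, Real.sqrt_sq (by norm_num)],
        ← Real.sqrt_mul (by norm_num), ← Real.sqrt_mul (by positivity)]
      congr 1
      have : n - 2 ≠ 0 := by linarith
      field_simp; norm_num
    rw [this]
    refine mul_le_mul_of_nonneg_left ?_ (by positivity)
    have hp : 0 < n - 2 := by linarith
    rw [Real.sqrt_le_iff]
    refine ⟨by positivity, ?_⟩
    have : n / (n - 2) = 1 + 2 * (1 / (n - 2)) := by field_simp; ring
    rw [this]
    nlinarith [sq_nonneg (1 / (n - 2))]
  have h4 : √(Real.pi / (1 / 2)) = 2 * √(Real.pi / 2) := by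
    rw [show Real.pi / (1 / 2) = 2 ^ 2 * (Real.pi / 2) by ring, Real.sqrt_mul (by norm_num), Real.sqrt_sq (by norm_num)]
  have h5 : √(Real.pi / 2) ≤ 1.26 := by
    rw [Real.sqrt_le_iff]
    refine ⟨by norm_num, ?_⟩
    have := Real.pi_lt_d2
    norm_num at this ⊢
    linarith
  rw [e, g, h4]
  have hp : 0 < n - 2 := by linarith
  have hp1 : 0 < n - 1 := by linarith
  have hp0 : 0 < n := by linarith
  calc _ ≤ √(Real.pi / 2) * (1 / (n - 2) + 3 / (2 * n)) := by
        have : 1 / (2 * n) * (3 * √(Real.pi / 2)) = √(Real.pi / 2) * (3 / (2 * n)) := by ring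
        rw [this]; nlinarith
    _ ≤ 1.26 * (1 / (n - 2) + 3 / (2 * n)) := mul_le_mul_of_nonneg_right h5 (by positivity)
    _ ≤ 4 / (n - 1) := by
        rw [div_add_div _ _ hp.ne' (by positivity), ← mul_div_assoc, div_le_div_iff₀ (by positivity) hp1]
        nlinarith [mul_nonneg (sub_nonneg.2 hn) (sub_nonneg.2 hn)]


/-- radial profile -/
def Hth (φ : ℝ → ℝ) (ρ σ t s : ℝ) : ℝ :=
  φ (s * Real.cos t) * φ (s * (ρ * Real.cos t + σ * Real.sin t))

lemma Hth_diff (φ : ℝ → ℝ) (hφ : Differentiable ℝ φ) (ρ σ t : ℝ) : Differentiable ℝ (Hth φ ρ σ t) := by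
  unfold Hth; fun_prop

lemma Hth_deriv (φ : ℝ → ℝ) (hφ : Differentiable ℝ φ) (C : ℝ) (h1 : ∀ x, |φ x| ≤ C)
    (h2 : ∀ x, |deriv φ x| ≤ C) (ρ σ t s : ℝ) :
    |deriv (Hth φ ρ σ t) s| ≤ C ^ 2 * (|Real.cos t| + |ρ * Real.cos t + σ * Real.sin t|) := by
  set a := Real.cos t
  set b := ρ * Real.cos t + σ * Real.sin t
  have d : ∀ c : ℝ, HasDerivAt (fun s => φ (s * c)) (deriv φ (s * c) * c) s := by
    intro c
    have := (hφ (s * c)).hasDerivAt.comp s ((hasDerivAt_id s).mul_const c)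
    rw [one_mul] at this
    exact this
  have h := (d a).mul (d b)
  have e : deriv (Hth φ ρ σ t) s = deriv φ (s * a) * a * φ (s * b) + φ (s * a) * (deriv φ (s * b) * b) :=
    h.deriv
  rw [e]
  have hC : 0 ≤ C := (abs_nonneg _).trans (h1 0)
  refine (abs_add_le _ _).trans ?_
  simp only [abs_mul]
  have p1 : |deriv φ (s * a)| * |φ (s * b)| ≤ C * C := mul_le_mul (h2 _) (h1 _) (abs_nonneg _) hC
  have p2 : |φ (s * a)| * |deriv φ (s * b)| ≤ C * C := mul_le_mul (h1 _) (h2 _) (abs_nonneg _) hC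
  nlinarith [mul_le_mul_of_nonneg_right p1 (abs_nonneg a), mul_le_mul_of_nonneg_right p2 (abs_nonneg b)]

lemma bdd_integrable {Ω : Type*} [MeasurableSpace Ω] (P : Measure Ω) [IsFiniteMeasure P] (f : Ω → ℝ)
    (hf : Measurable f) (C : ℝ) (h : ∀ x, |f x| ≤ C) : Integrable f P :=
  Integrable.of_bound hf.aestronglyMeasurable C (Filter.Eventually.of_forall h)

lemma ang_bound (ρ σ : ℝ) (h : ρ ^ 2 + σ ^ 2 = 1) :
    ∫ t, (|Real.cos t| + |ρ * Real.cos t + σ * Real.sin t|) ∂unif ≤ √2 := by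
  have i : Integrable (fun t => (Real.cos t ^ 2 + (ρ * Real.cos t + σ * Real.sin t) ^ 2 + 1) / √2) unif := by
    apply Integrable.div_const
    refine Integrable.of_bound (C := 1 + (|ρ| + |σ|) ^ 2 + 1) (Measurable.aestronglyMeasurable (by fun_prop)) (Filter.Eventually.of_forall ?_)
    intro t
    rw [Real.norm_of_nonneg (by positivity)]
    have h1 : Real.cos t ^ 2 ≤ 1 := Real.cos_sq_le_one t
    have h2 : |ρ * Real.cos t + σ * Real.sin t| ≤ |ρ| + |σ| := by
      refine (abs_add_le _ _).trans ?_
      rw [abs_mul, abs_mul]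
      have := Real.abs_cos_le_one t
      have := Real.abs_sin_le_one t
      have := abs_nonneg ρ
      have := abs_nonneg σ
      nlinarith
    have h3 := pow_le_pow_left₀ (abs_nonneg _) h2 2
    rw [sq_abs] at h3
    linarith
  have s2 : √2 * √2 = (2:ℝ) := Real.mul_self_sqrt (by norm_num)
  have s2p : 0 < √(2:ℝ) := by positivity
  calc _ ≤ ∫ t, (Real.cos t ^ 2 + (ρ * Real.cos t + σ * Real.sin t) ^ 2 + 1) / √2 ∂unif := by
        refine integral_mono_of_nonneg (Filter.Eventually.of_forall fun t => by positivity) i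
          (Filter.Eventually.of_forall fun t => ?_)
        simp only
        rw [le_div_iff₀ s2p]
        generalize Real.cos t = a
        generalize ρ * a + σ * Real.sin t = b
        nlinarith [sq_nonneg (|a| * √2 - 1), sq_nonneg (|b| * √2 - 1), sq_abs a, sq_abs b]
    _ = √2 := by
        rw [unif_integral, intervalIntegral.integral_div]
        have e : ∀ t, Real.cos t ^ 2 + (ρ * Real.cos t + σ * Real.sin t) ^ 2 + 1 =
          ((1 + ρ ^ 2) * Real.cos t ^ 2 + σ ^ 2 * Real.sin t ^ 2) + ((2 * ρ * σ) * (Real.sin t * Real.cos t) + 1) := by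
          intro t; ring
        simp_rw [e]
        rw [intervalIntegral.integral_add (Continuous.intervalIntegrable (by fun_prop) _ _) (Continuous.intervalIntegrable (by fun_prop) _ _),
          intervalIntegral.integral_add (Continuous.intervalIntegrable (by fun_prop) _ _) (Continuous.intervalIntegrable (by fun_prop) _ _),
          intervalIntegral.integral_add (Continuous.intervalIntegrable (by fun_prop) _ _) (Continuous.intervalIntegrable (by fun_prop) _ _),
          intervalIntegral.integral_const_mul, intervalIntegral.integral_const_mul, intervalIntegral.integral_const_mul,
          integral_cos_sq, integral_sin_sq, integral_sin_mul_cos₁]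
        simp
        have hp := Real.pi_pos
        field_simp
        nlinarith

lemma core_gauss (N : ℕ) (hN : N ≠ 0) (n : ℝ) (hn : n = N + 2) (φ : ℝ → ℝ) (hφ : Differentiable ℝ φ) (C : ℝ)
    (h1 : ∀ x, |φ x| ≤ C) (h2 : ∀ x, |deriv φ x| ≤ C) (ρ σ : ℝ) (h : ρ ^ 2 + σ ^ 2 = 1) :
    |∫ q : (ℝ × ℝ) × (Fin N → ℝ),
        φ (√n * (q.1.1 / √(q.1.1 ^ 2 + q.1.2 ^ 2 + ∑ j, q.2 j ^ 2))) *
        φ (√n * ((ρ * q.1.1 + σ * q.1.2) / √(q.1.1 ^ 2 + q.1.2 ^ 2 + ∑ j, q.2 j ^ 2)))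
        ∂(((gaussianReal 0 1).prod (gaussianReal 0 1)).prod (Measure.pi (fun _ : Fin N => gaussianReal 0 1)))
      - ∫ p : ℝ × ℝ, φ p.1 * φ (ρ * p.1 + σ * p.2) ∂((gaussianReal 0 1).prod (gaussianReal 0 1))|
      ≤ 4 * √2 * C ^ 2 / (n - 1) := by
  have hC : 0 ≤ C := (abs_nonneg _).trans (h1 0)
  have hφm : Measurable φ := hφ.continuous.measurable
  have hN1 : (1:ℝ) ≤ N := by exact_mod_cast Nat.one_le_iff_ne_zero.2 hN
  have hn3 : 3 ≤ n := by linarith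
  set π := Measure.pi (fun _ : Fin N => gaussianReal 0 1) with hπ
  set X : ℝ × (Fin N → ℝ) → ℝ := fun q => √n * q.1 / √(q.1 ^ 2 + ∑ j, q.2 j ^ 2) with hX
  have hXm : Measurable X := by fun_prop
  have hb : ∀ a b, |φ a * φ b| ≤ C * C := fun a b => by
    rw [abs_mul]; exact mul_le_mul (h1 _) (h1 _) (abs_nonneg _) hC
  have hHm : Measurable (fun p : ℝ × ℝ => Hth φ ρ σ p.1 p.2) := by unfold Hth; fun_prop
  have e1 : ∫ q : (ℝ × ℝ) × (Fin N → ℝ),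
        φ (√n * (q.1.1 / √(q.1.1 ^ 2 + q.1.2 ^ 2 + ∑ j, q.2 j ^ 2))) *
        φ (√n * ((ρ * q.1.1 + σ * q.1.2) / √(q.1.1 ^ 2 + q.1.2 ^ 2 + ∑ j, q.2 j ^ 2)))
        ∂(((gaussianReal 0 1).prod (gaussianReal 0 1)).prod π) =
      ∫ t, ∫ q, Hth φ ρ σ t (X q) ∂(rayl.prod π) ∂unif := by
    rw [polar_eq]
    have hm : ((unif.prod rayl).map (fun p : ℝ × ℝ => (p.2 * Real.cos p.1, p.2 * Real.sin p.1))).prod π =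
        ((unif.prod rayl).prod π).map
          (Prod.map (fun p : ℝ × ℝ => (p.2 * Real.cos p.1, p.2 * Real.sin p.1)) id) := by
      rw [← Measure.map_prod_map _ _ (by fun_prop) measurable_id, Measure.map_id]
    rw [hm, integral_map (by fun_prop) (Measurable.aestronglyMeasurable (by fun_prop))]
    rw [← integral_prod (fun p : ℝ × (ℝ × (Fin N → ℝ)) => Hth φ ρ σ p.1 (X p.2)),
      ← Measure.prodAssoc_prod, integral_map_equiv]
    · refine integral_congr_ae (Filter.Eventually.of_forall fun q => ?_)
      simp only [Prod.map, id, MeasurableEquiv.prodAssoc, MeasurableEquiv.coe_mk, Equiv.prodAssoc_apply, Hth, hX]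
      have : (q.1.2 * Real.cos q.1.1) ^ 2 + (q.1.2 * Real.sin q.1.1) ^ 2 = q.1.2 ^ 2 := by
        have := Real.sin_sq_add_cos_sq q.1.1
        linear_combination q.1.2 ^ 2 * this
      rw [this]
      congr 2 <;> ring
    · exact bdd_integrable _ _ (hHm.comp (measurable_fst.prodMk (hXm.comp measurable_snd))) (C * C) (fun p => hb _ _)
  have e2 : ∫ p : ℝ × ℝ, φ p.1 * φ (ρ * p.1 + σ * p.2) ∂((gaussianReal 0 1).prod (gaussianReal 0 1)) =
      ∫ t, ∫ r, Hth φ ρ σ t r ∂rayl ∂unif := by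
    rw [polar_eq, integral_map (by fun_prop) (Measurable.aestronglyMeasurable (by fun_prop)),
      ← integral_prod (fun p : ℝ × ℝ => Hth φ ρ σ p.1 p.2)]
    · refine integral_congr_ae (Filter.Eventually.of_forall fun q => ?_)
      simp only [Hth]
      congr 2; ring
    · exact bdd_integrable _ _ hHm (C * C) (fun p => hb _ _)
  have key : ∀ t, |∫ q, Hth φ ρ σ t (X q) ∂(rayl.prod π) - ∫ r, Hth φ ρ σ t r ∂rayl| ≤
      C ^ 2 * (|Real.cos t| + |ρ * Real.cos t + σ * Real.sin t|) * ∫ s in Set.Ioi (0:ℝ), Dfun n s := by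
    intro t
    have hb0 : ∀ g : Fin N → ℝ, 0 ≤ ∑ j, g j ^ 2 := fun g => Finset.sum_nonneg fun _ _ => sq_nonneg _
    have hX0 : ∀ᵐ q ∂(rayl.prod π), 0 ≤ X q := by
      have : ∀ᵐ q ∂(rayl.prod π), 0 < q.1 := Measure.quasiMeasurePreserving_fst.ae rayl_pos
      filter_upwards [this] with q hq
      positivity
    refine w1_bound (rayl.prod π) rayl X hXm hX0 ?_ (fun r => r) measurable_id
      (rayl_pos.mono fun r hr => hr.le) rayl_integrable
      (fun s => √(1 - s ^ 2 / n) ^ N) (fun s => Real.exp (-s ^ 2 / 2)) (Dfun n)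
      (fun s hs => tail_X N hN n s (by linarith) hs) tail_Y ?_ ?_ (D_int n hn3).1
      (fun s hs => D_bound N n s hn hs) _ (Hth_diff φ hφ ρ σ t) _ (Hth_deriv φ hφ C h1 h2 ρ σ t)
    · refine Integrable.of_bound hXm.aestronglyMeasurable (√n) ?_
      filter_upwards [hX0] with q hq
      rw [Real.norm_of_nonneg hq]
      exact X_le n _ _ (hb0 _)
    · have hbb : 0 < (n - 2) / (2 * n) := div_pos (by linarith) (by linarith)
      refine Integrable.mono' ((integrable_exp_neg_mul_sq hbb).integrableOn (s := Set.Ioi 0))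
        (Measurable.aestronglyMeasurable (by fun_prop)) (Filter.Eventually.of_forall fun s => ?_)
      rw [Real.norm_of_nonneg (by positivity)]
      exact T1_le N n s hn
    · refine ((integrable_exp_neg_mul_sq (b := 1 / 2) (by norm_num)).integrableOn (s := Set.Ioi 0)).congr
        (Filter.Eventually.of_forall fun s => ?_)
      simp only
      congr 1; ring
  have m1 : Measurable (fun t => ∫ q, Hth φ ρ σ t (X q) ∂(rayl.prod π)) := by
    have : Measurable (fun p : ℝ × (ℝ × (Fin N → ℝ)) => Hth φ ρ σ p.1 (X p.2)) :=
      hHm.comp (measurable_fst.prodMk (hXm.comp measurable_snd))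
    exact this.stronglyMeasurable.integral_prod_right.measurable
  have m2 : Measurable (fun t => ∫ r, Hth φ ρ σ t r ∂rayl) :=
    hHm.stronglyMeasurable.integral_prod_right.measurable
  have pb : ∀ {Ω : Type} [MeasurableSpace Ω] (P : Measure Ω) [IsProbabilityMeasure P] (f : Ω → ℝ) (t : ℝ),
      |∫ q, Hth φ ρ σ t (f q) ∂P| ≤ C * C := by
    intro Ω _ P _ f t
    have := norm_integral_le_of_norm_le_const (μ := P) (f := fun q => Hth φ ρ σ t (f q)) (C := C * C)
      (Filter.Eventually.of_forall fun q => hb _ _)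
    simpa using this
  rw [e1, e2, ← integral_sub (bdd_integrable _ _ m1 (C * C) (fun t => pb _ X t))
    (bdd_integrable _ _ m2 (C * C) (fun t => pb _ (fun r => r) t)), ← Real.norm_eq_abs]
  have hang : Integrable (fun t => (|Real.cos t| + |ρ * Real.cos t + σ * Real.sin t|)) unif := by
    refine Integrable.of_bound (C := 1 + (|ρ| + |σ|)) (Measurable.aestronglyMeasurable (by fun_prop)) (Filter.Eventually.of_forall ?_)
    intro t
    rw [Real.norm_of_nonneg (by positivity)]
    have h1 := Real.abs_cos_le_one t
    have h2 : |ρ * Real.cos t + σ * Real.sin t| ≤ |ρ| + |σ| := by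
      refine (abs_add_le _ _).trans ?_
      rw [abs_mul, abs_mul]
      have := Real.abs_sin_le_one t
      have := abs_nonneg ρ
      have := abs_nonneg σ
      nlinarith
    linarith
  refine (norm_integral_le_of_norm_le ((hang.const_mul (C ^ 2)).mul_const _)
    (Filter.Eventually.of_forall key)).trans ?_
  rw [integral_mul_const, integral_const_mul]
  have hD0 : 0 ≤ ∫ s in Set.Ioi (0:ℝ), Dfun n s :=
    setIntegral_nonneg measurableSet_Ioi fun s hs => (abs_nonneg _).trans (D_bound N n s hn hs)
  calc _ ≤ C ^ 2 * √2 * (4 / (n - 1)) :=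
        mul_le_mul (mul_le_mul_of_nonneg_left (ang_bound ρ σ h) (sq_nonneg C)) (D_int n hn3).2 hD0 (by positivity)
    _ = _ := by ring

lemma meas_entry {m n : Type*} (i : m) (j : n) : Measurable (fun M : Matrix m n ℝ => M i j) :=
  (measurable_pi_apply j).comp (measurable_pi_apply (X := fun _ : m => n → ℝ) i)

lemma meas_mulVec {m n : Type*} [Fintype n] (v : n → ℝ) (i : m) :
    Measurable (fun M : Matrix m n ℝ => (M *ᵥ v) i) := by
  simp only [Matrix.mulVec, dotProduct]
  exact Finset.measurable_sum _ fun j _ => (meas_entry i j).mul_const _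

lemma meas_matrix {Ω m n : Type*} [MeasurableSpace Ω] (f : Ω → Matrix m n ℝ)
    (h : ∀ i j, Measurable fun x => f x i j) : Measurable f :=
  measurable_pi_iff.2 fun i => measurable_pi_iff.2 fun j => h i j

lemma meas_mul {n : ℕ} (Q : Matrix (Fin n) (Fin n) ℝ) :
    Measurable (fun M : Matrix (Fin n) (Fin n) ℝ => Q * M) := by
  refine meas_matrix _ fun i j => ?_
  simp only [Matrix.mul_apply]
  exact Finset.measurable_sum _ fun a _ => (meas_entry a j).const_mul _

lemma exists_orth_row {n : ℕ} (i : Fin n) (u : EuclideanSpace ℝ (Fin n)) (hu : ‖u‖ = 1) :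
    ∃ Q : Matrix (Fin n) (Fin n) ℝ, Qᵀ * Q = 1 ∧ ∀ j, Q i j = u j := by
  have ho : Orthonormal ℝ (({i} : Set (Fin n)).domRestrict (fun _ => u)) := by
    constructor
    · intro a; simpa [Set.domRestrict] using hu
    · intro a b hab
      exact absurd (Subsingleton.elim a b) hab
  obtain ⟨b, hb⟩ := ho.exists_orthonormalBasis_extension_of_card_eq (by simp)
  refine ⟨Matrix.of fun a c => b a c, ?_, fun j => ?_⟩
  · rw [mul_eq_one_comm]
    ext a c
    rw [Matrix.mul_apply, Matrix.one_apply]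
    have := orthonormal_iff_ite.1 b.orthonormal c a
    rw [PiLp.inner_apply] at this
    simp only [RCLike.inner_apply, conj_trivial] at this
    simp only [Matrix.of_apply, Matrix.transpose_apply]
    rw [this]
    simp [eq_comm]
  · simp [hb i rfl]

lemma split_pi (N : ℕ) : MeasurePreserving
    (fun x : Fin (N + 2) → ℝ => (((x 0, x 1), fun j : Fin N => x j.succ.succ) : (ℝ × ℝ) × (Fin N → ℝ)))
    (Measure.pi (fun _ => gaussianReal 0 1))
    (((gaussianReal 0 1).prod (gaussianReal 0 1)).prod (Measure.pi (fun _ : Fin N => gaussianReal 0 1))) := by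
  have h1 := measurePreserving_piFinSuccAbove (fun _ : Fin (N + 2) => gaussianReal 0 1) 0
  have h2 := measurePreserving_piFinSuccAbove (fun _ : Fin (N + 1) => gaussianReal 0 1) 0
  have h3 := (MeasurePreserving.id (gaussianReal 0 1)).prod h2
  have h4 : MeasurePreserving (MeasurableEquiv.prodAssoc (α := ℝ) (β := ℝ) (γ := Fin N → ℝ))
    (((gaussianReal 0 1).prod (gaussianReal 0 1)).prod (Measure.pi (fun _ : Fin N => gaussianReal 0 1)))
    ((gaussianReal 0 1).prod ((gaussianReal 0 1).prod (Measure.pi (fun _ : Fin N => gaussianReal 0 1)))) :=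
    ⟨MeasurableEquiv.measurable _, Measure.prodAssoc_prod⟩
  exact h4.symm.comp (h3.comp h1)

lemma exists_basis (N : ℕ) (x y : EuclideanSpace ℝ (Fin (N + 2))) (ρ σ : ℝ)
    (hx : inner ℝ x x = (1:ℝ)) (hy : inner ℝ y y = (1:ℝ)) (hxy : inner ℝ x y = ρ)
    (h : ρ ^ 2 + σ ^ 2 = 1) :
    ∃ b : OrthonormalBasis (Fin (N + 2)) ℝ (EuclideanSpace ℝ (Fin (N + 2))),
      b 0 = x ∧ ρ • b 0 + σ • b 1 = y := by
  have hnx : ‖x‖ = 1 := by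
    rw [real_inner_self_eq_norm_sq] at hx
    exact (pow_eq_one_iff_of_nonneg (norm_nonneg _) two_ne_zero).1 hx
  by_cases hσ : σ = 0
  · have ho : Orthonormal ℝ (({0} : Set (Fin (N+2))).domRestrict (fun _ => x)) := by
      constructor
      · intro a; simpa [Set.domRestrict] using hnx
      · intro a b hab
        exact absurd (Subsingleton.elim a b) hab
    obtain ⟨b, hb⟩ := ho.exists_orthonormalBasis_extension_of_card_eq (by simp)
    have hb0 := hb 0 rfl
    refine ⟨b, hb0, ?_⟩
    rw [hb0, hσ, zero_smul, add_zero]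
    have : inner ℝ (ρ • x - y) (ρ • x - y) = (0:ℝ) := by
      rw [inner_sub_left, inner_sub_right, inner_sub_right]
      have hyx : inner ℝ y x = ρ := by rw [real_inner_comm]; exact hxy
      simp only [real_inner_smul_left, real_inner_smul_right, hx, hy, hxy, hyx]
      rw [hσ] at h
      nlinarith
    exact sub_eq_zero.1 (inner_self_eq_zero.1 this)
  · set w := σ⁻¹ • (y - ρ • x) with hw
    have hyx : inner ℝ y x = ρ := by rw [real_inner_comm]; exact hxy
    have hxw : inner ℝ x w = (0:ℝ) := by
      rw [hw, real_inner_smul_right, inner_sub_right, real_inner_smul_right, hx, hxy]; ring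
    have hww : inner ℝ w w = (1:ℝ) := by
      rw [hw, real_inner_smul_left, real_inner_smul_right, inner_sub_left, inner_sub_right, inner_sub_right]
      simp only [real_inner_smul_left, real_inner_smul_right, hx, hy, hxy, hyx]
      field_simp
      linarith
    have hnw : ‖w‖ = 1 := by
      rw [real_inner_self_eq_norm_sq] at hww
      exact (pow_eq_one_iff_of_nonneg (norm_nonneg _) two_ne_zero).1 hww
    have hwx : inner ℝ w x = (0:ℝ) := by rw [real_inner_comm]; exact hxw
    have h01 : (0 : Fin (N+2)) ≠ 1 := by simp
    have ho : Orthonormal ℝ (({0, 1} : Set (Fin (N+2))).domRestrict (fun j => if j = 0 then x else w)) := by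
      constructor
      · rintro ⟨a, rfl | rfl⟩
        · simpa [Set.domRestrict] using hnx
        · simpa [Set.domRestrict] using hnw
      · rintro ⟨a, rfl | rfl⟩ ⟨b, rfl | rfl⟩ hab
        · exact absurd rfl hab
        · simpa [Set.domRestrict] using hxw
        · simpa [Set.domRestrict] using hwx
        · exact absurd rfl hab
    obtain ⟨b, hb⟩ := ho.exists_orthonormalBasis_extension_of_card_eq (by simp)
    have hb0 : b 0 = x := by simpa using hb 0 (by simp)
    have hb1 : b 1 = w := by simpa using hb 1 (by simp)
    refine ⟨b, hb0, ?_⟩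
    rw [hb0, hb1, hw, smul_smul, mul_inv_cancel₀ hσ]
    simp

lemma gauss_plane (N : ℕ) (x y : EuclideanSpace ℝ (Fin (N + 2))) (ρ σ n : ℝ)
    (hx : inner ℝ x x = (1:ℝ)) (hy : inner ℝ y y = (1:ℝ)) (hxy : inner ℝ x y = ρ)
    (h : ρ ^ 2 + σ ^ 2 = 1) (φ : ℝ → ℝ) (hφ : Measurable φ) :
    ∫ G, φ (√n * (inner ℝ G x / ‖G‖)) * φ (√n * (inner ℝ G y / ‖G‖))
      ∂(stdGaussian (EuclideanSpace ℝ (Fin (N + 2)))) =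
    ∫ q : (ℝ × ℝ) × (Fin N → ℝ),
        φ (√n * (q.1.1 / √(q.1.1 ^ 2 + q.1.2 ^ 2 + ∑ j, q.2 j ^ 2))) *
        φ (√n * ((ρ * q.1.1 + σ * q.1.2) / √(q.1.1 ^ 2 + q.1.2 ^ 2 + ∑ j, q.2 j ^ 2)))
        ∂(((gaussianReal 0 1).prod (gaussianReal 0 1)).prod (Measure.pi (fun _ : Fin N => gaussianReal 0 1))) := by
  obtain ⟨b, hb0, hb1⟩ := exists_basis N x y ρ σ hx hy hxy h
  rw [stdGaussian_eq_map_pi_orthonormalBasis b, ← (split_pi N).map_eq,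
    integral_map (Measurable.aemeasurable (by fun_prop)) (Measurable.aestronglyMeasurable (by fun_prop)),
    integral_map (split_pi N).measurable.aemeasurable (Measurable.aestronglyMeasurable (by fun_prop))]
  refine integral_congr_ae (Filter.Eventually.of_forall fun g => ?_)
  simp only
  have hin : ∀ i, inner ℝ (∑ i, g i • b i) (b i) = g i := by
    intro i
    rw [real_inner_comm]
    exact b.orthonormal.inner_right_fintype g i
  have i0 : inner ℝ (∑ i, g i • b i) x = g 0 := by rw [← hb0]; exact hin 0
  have i1 : inner ℝ (∑ i, g i • b i) y = ρ * g 0 + σ * g 1 := by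
    rw [← hb1, inner_add_right, real_inner_smul_right, real_inner_smul_right, hin, hin]
  have hnm : ‖∑ i, g i • b i‖ = √(g 0 ^ 2 + g 1 ^ 2 + ∑ j : Fin N, g j.succ.succ ^ 2) := by
    rw [eq_comm, Real.sqrt_eq_iff_mul_self_eq (by positivity) (norm_nonneg _),
      ← real_inner_self_eq_norm_mul_norm, b.orthonormal.inner_sum]
    simp only [conj_trivial]
    rw [Fin.sum_univ_succ, Fin.sum_univ_succ]
    simp only [Fin.succ_zero_eq_one]
    ring_nf
  rw [i0, i1, hnm]

lemma haar_row (N : ℕ) (μ : Measure (Matrix (Fin (N + 2)) (Fin (N + 2)) ℝ)) (hμ : IsHaarO (N + 2) μ)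
    (v w : Fin (N + 2) → ℝ) (ρ σ n C : ℝ) (hv : v ⬝ᵥ v = 1) (hw : w ⬝ᵥ w = 1) (hvw : v ⬝ᵥ w = ρ)
    (h : ρ ^ 2 + σ ^ 2 = 1) (φ : ℝ → ℝ) (hφ : Measurable φ) (hφb : ∀ x, |φ x| ≤ C) (i : Fin (N + 2)) :
    ∫ M, φ (√n * (M *ᵥ v) i) * φ (√n * (M *ᵥ w) i) ∂μ =
    ∫ q : (ℝ × ℝ) × (Fin N → ℝ),
        φ (√n * (q.1.1 / √(q.1.1 ^ 2 + q.1.2 ^ 2 + ∑ j, q.2 j ^ 2))) *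
        φ (√n * ((ρ * q.1.1 + σ * q.1.2) / √(q.1.1 ^ 2 + q.1.2 ^ 2 + ∑ j, q.2 j ^ 2)))
        ∂(((gaussianReal 0 1).prod (gaussianReal 0 1)).prod (Measure.pi (fun _ : Fin N => gaussianReal 0 1))) := by
  obtain ⟨hP, hO, hI⟩ := hμ
  have hC : 0 ≤ C := (abs_nonneg _).trans (hφb 0)
  set F : EuclideanSpace ℝ (Fin (N + 2)) → Matrix (Fin (N + 2)) (Fin (N + 2)) ℝ → ℝ := fun G M =>
    φ (√n * (inner ℝ G (WithLp.toLp 2 (M *ᵥ v)) / ‖G‖)) *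
    φ (√n * (inner ℝ G (WithLp.toLp 2 (M *ᵥ w)) / ‖G‖)) with hF
  have hinn : ∀ (G : EuclideanSpace ℝ (Fin (N + 2))) (a : Fin (N + 2) → ℝ),
      inner ℝ G (WithLp.toLp 2 a) = ∑ j, G j * a j := by
    intro G a
    rw [PiLp.inner_apply]
    simp [mul_comm]
  have hmm : ∀ u : Fin (N + 2) → ℝ, Measurable (fun p : EuclideanSpace ℝ (Fin (N + 2)) ×
      Matrix (Fin (N + 2)) (Fin (N + 2)) ℝ => (inner ℝ p.1 (WithLp.toLp 2 (p.2 *ᵥ u)) : ℝ)) := by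
    intro u
    simp only [hinn]
    refine Finset.measurable_sum _ fun j _ => ?_
    refine Measurable.mul ?_ ((meas_mulVec u j).comp measurable_snd)
    fun_prop
  have hFm : Measurable (Function.uncurry F) := by
    have m0 : Measurable (fun p : EuclideanSpace ℝ (Fin (N + 2)) ×
      Matrix (Fin (N + 2)) (Fin (N + 2)) ℝ => ‖p.1‖) := by fun_prop
    exact (hφ.comp (((hmm v).div m0).const_mul _)).mul (hφ.comp (((hmm w).div m0).const_mul _))
  have hFi : Integrable (Function.uncurry F) ((stdGaussian (EuclideanSpace ℝ (Fin (N + 2)))).prod μ) := by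
    refine bdd_integrable _ _ hFm (C * C) fun p => ?_
    simp only [Function.uncurry, hF, abs_mul]
    exact mul_le_mul (hφb _) (hφb _) (abs_nonneg _) hC
  have s1 : ∀ G : EuclideanSpace ℝ (Fin (N + 2)), G ≠ 0 → ∫ M, F G M ∂μ =
      ∫ M, φ (√n * (M *ᵥ v) i) * φ (√n * (M *ᵥ w) i) ∂μ := by
    intro G hG
    have hG0 : ‖G‖ ≠ 0 := norm_ne_zero_iff.2 hG
    obtain ⟨Q, hQ, hQi⟩ := exists_orth_row i (‖G‖⁻¹ • G) (by rw [norm_smul]; simp [hG0])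
    conv_rhs => rw [← hI Q hQ]
    rw [integral_map (meas_mul Q).aemeasurable]
    · refine integral_congr_ae (Filter.Eventually.of_forall fun M => ?_)
      have : ∀ u, ((Q * M) *ᵥ u) i = inner ℝ G (WithLp.toLp 2 (M *ᵥ u)) / ‖G‖ := by
        intro u
        rw [← Matrix.mulVec_mulVec, hinn, Matrix.mulVec, dotProduct, Finset.sum_div]
        refine Finset.sum_congr rfl fun j _ => ?_
        rw [hQi]
        simp
        ring
      simp only [this, hF]
    · exact Measurable.aestronglyMeasurable
        ((hφ.comp ((meas_mulVec v i).const_mul _)).mul (hφ.comp ((meas_mulVec w i).const_mul _)))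
  have hne : ∀ᵐ G ∂(stdGaussian (EuclideanSpace ℝ (Fin (N + 2)))), G ≠ 0 := by
    have hms : MeasurableSet {G : EuclideanSpace ℝ (Fin (N + 2)) | G ≠ 0} :=
      (measurableSet_singleton 0).compl
    rw [← map_pi_eq_stdGaussian, ae_map_iff (Measurable.aemeasurable (by fun_prop)) hms]
    have : ∀ᵐ x ∂(Measure.pi (fun _ : Fin (N + 2) => gaussianReal 0 1)), x ≠ 0 := by
      have h1 := (split_pi N).quasiMeasurePreserving
      have h2 : ∀ᵐ q ∂(((gaussianReal 0 1).prod (gaussianReal 0 1)).prod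
          (Measure.pi (fun _ : Fin N => gaussianReal 0 1))), q.1.1 ≠ 0 := by
        have h3 : ∀ᵐ x ∂(gaussianReal 0 1), x ≠ 0 :=
          (gaussianReal_absolutelyContinuous 0 one_ne_zero).ae_le (Measure.ae_ne volume 0)
        exact Measure.quasiMeasurePreserving_fst.ae (Measure.quasiMeasurePreserving_fst.ae h3)
      filter_upwards [h1.ae h2] with x hx hx0
      exact hx (by simp [hx0])
    filter_upwards [this] with x hx h0
    exact hx (by simpa using h0)
  have s2 : ∫ G, ∫ M, F G M ∂μ ∂(stdGaussian (EuclideanSpace ℝ (Fin (N + 2)))) =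
      ∫ M, φ (√n * (M *ᵥ v) i) * φ (√n * (M *ᵥ w) i) ∂μ := by
    rw [integral_congr_ae (g := fun _ => ∫ M, φ (√n * (M *ᵥ v) i) * φ (√n * (M *ᵥ w) i) ∂μ)
      (hne.mono fun G hG => s1 G hG)]
    simp
  rw [← s2, integral_integral_swap hFi]
  have s3 : ∀ᵐ M ∂μ, ∫ G, F G M ∂(stdGaussian (EuclideanSpace ℝ (Fin (N + 2)))) =
    ∫ q : (ℝ × ℝ) × (Fin N → ℝ),
        φ (√n * (q.1.1 / √(q.1.1 ^ 2 + q.1.2 ^ 2 + ∑ j, q.2 j ^ 2))) *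
        φ (√n * ((ρ * q.1.1 + σ * q.1.2) / √(q.1.1 ^ 2 + q.1.2 ^ 2 + ∑ j, q.2 j ^ 2)))
        ∂(((gaussianReal 0 1).prod (gaussianReal 0 1)).prod (Measure.pi (fun _ : Fin N => gaussianReal 0 1))) := by
    filter_upwards [hO] with M hM
    have hp : ∀ a b : Fin (N + 2) → ℝ,
        inner ℝ (WithLp.toLp 2 (M *ᵥ a) : EuclideanSpace ℝ (Fin (N + 2))) (WithLp.toLp 2 (M *ᵥ b)) = a ⬝ᵥ b := by
      intro a b
      rw [hinn]
      change (M *ᵥ a) ⬝ᵥ (M *ᵥ b) = a ⬝ᵥ b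
      rw [Matrix.dotProduct_mulVec, ← Matrix.mulVec_transpose, Matrix.mulVec_mulVec, hM, Matrix.one_mulVec]
    exact gauss_plane N _ _ ρ σ n (by rw [hp, hv]) (by rw [hp, hw]) (by rw [hp, hvw]) h φ hφ
  rw [integral_congr_ae s3]
  simp

lemma dot_pad {k n : ℕ} (hk : k ≤ n) (a : Fin n → ℝ) (z : Fin k → ℝ) :
    a ⬝ᵥ (Function.extend (Fin.castLE hk) z 0) = ∑ j, a (Fin.castLE hk j) * z j := by
  have hi : Function.Injective (Fin.castLE hk) := Fin.castLE_injective hk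
  symm
  refine Fintype.sum_of_injective _ hi _ _ ?_ ?_
  · intro i hnot
    rw [Function.extend_apply' _ _ _ (fun ⟨a, ha⟩ => hnot ⟨a, ha⟩)]
    simp
  · intro i
    rw [hi.extend_apply]

lemma main_n (n m k : ℕ) (hm : 0 < m) (hk : 0 < k) (hn : 2 ≤ n) (hmn : m ≤ n) (hkn : k ≤ n)
    (μ : Measure (Matrix (Fin n) (Fin n) ℝ)) (hμ : IsHaarO n μ)
    (φ : ℝ → ℝ) (C : ℝ) (hφdiff : Differentiable ℝ φ)
    (hφ : ∀ x, |φ x| ≤ C) (hφ' : ∀ x, |deriv φ x| ≤ C)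
    (z z' : Fin k → ℝ) (hz : z ⬝ᵥ z = (k : ℝ)) (hz' : z' ⬝ᵥ z' = (k : ℝ)) :
    |(∫ W, kernelF φ W z z' ∂(μ.map (suoOfHaar hmn hkn))) - approxKernel φ (covMat z z')| ≤
      4 * Real.sqrt 2 * Real.sqrt m * C ^ 2 / ((n : ℝ) - 1) := by
  have hC : 0 ≤ C := (abs_nonneg _).trans (hφ 0)
  have hk0 : (0:ℝ) < k := by exact_mod_cast hk
  have hm0 : (0:ℝ) < m := by exact_mod_cast hm
  have hm1 : (1:ℝ) ≤ m := by exact_mod_cast hm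
  have hsm : 1 ≤ √(m:ℝ) := Real.one_le_sqrt.2 hm1
  have hφm : Measurable φ := hφdiff.continuous.measurable
  obtain ⟨N, rfl⟩ : ∃ N, n = N + 2 := ⟨n - 2, by omega⟩
  set ρ : ℝ := (z ⬝ᵥ z') / k with hρ
  have hρ1 : ρ ^ 2 ≤ 1 := by
    have := Finset.sum_mul_sq_le_sq_mul_sq Finset.univ z z'
    have e1 : ∑ i, z i ^ 2 = k := by rw [← hz]; simp [dotProduct, sq]
    have e2 : ∑ i, z' i ^ 2 = k := by rw [← hz']; simp [dotProduct, sq]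
    rw [e1, e2] at this
    rw [hρ, div_pow, div_le_one (by positivity), sq (k:ℝ)]
    exact this
  set σ : ℝ := √(1 - ρ ^ 2) with hσ
  have hρσ : ρ ^ 2 + σ ^ 2 = 1 := by
    rw [hσ, Real.sq_sqrt (by linarith)]; ring
  have hA : approxKernel φ (covMat z z') = ∫ p : ℝ × ℝ, φ p.1 * φ (ρ * p.1 + σ * p.2)
      ∂((gaussianReal 0 1).prod (gaussianReal 0 1)) := by
    have h00 : covMat z z' 0 0 = 1 := by simp [covMat, hz, hk0.ne']
    have h11 : covMat z z' 1 1 = 1 := by simp [covMat, hz', hk0.ne']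
    have h10 : covMat z z' 1 0 = ρ := by
      simp only [covMat, hρ, dotProduct_comm z z']
      simp [div_eq_inv_mul]
    simp only [approxKernel, h00, h11, h10, Real.sqrt_one, one_mul, div_one, ← hσ]
  set v : Fin (N + 2) → ℝ := Function.extend (Fin.castLE hkn) (fun j => z j / √k) 0 with hv
  set w : Fin (N + 2) → ℝ := Function.extend (Fin.castLE hkn) (fun j => z' j / √k) 0 with hw
  have hinj : Function.Injective (Fin.castLE hkn) := Fin.castLE_injective hkn
  have hsk : √(k:ℝ) * √(k:ℝ) = k := Real.mul_self_sqrt hk0.le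
  have hpp : ∀ a b : Fin k → ℝ, (Function.extend (Fin.castLE hkn) (fun j => a j / √k) 0 : Fin (N+2) → ℝ) ⬝ᵥ
      (Function.extend (Fin.castLE hkn) (fun j => b j / √k) 0) = (a ⬝ᵥ b) / k := by
    intro a b
    rw [dot_pad, dotProduct, Finset.sum_div]
    refine Finset.sum_congr rfl fun j _ => ?_
    rw [hinj.extend_apply, div_mul_div_comm, hsk]
  have hvv : v ⬝ᵥ v = 1 := by rw [hv, hpp, hz, div_self hk0.ne']
  have hww : w ⬝ᵥ w = 1 := by rw [hw, hpp, hz', div_self hk0.ne']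
  have hvw : v ⬝ᵥ w = ρ := by rw [hv, hw, hpp]
  have hmv : ∀ (M : Matrix (Fin (N+2)) (Fin (N+2)) ℝ) (a : Fin k → ℝ) (i : Fin m),
      ((suoOfHaar hmn hkn M) *ᵥ a) i = √((N+2 : ℕ) : ℝ) *
        (M *ᵥ (Function.extend (Fin.castLE hkn) (fun j => a j / √k) 0)) (Fin.castLE hmn i) := by
    intro M a i
    rw [Matrix.mulVec, Matrix.mulVec, dot_pad, dotProduct, Finset.mul_sum]
    refine Finset.sum_congr rfl fun j _ => ?_
    simp only [suoOfHaar, Matrix.smul_apply, Matrix.submatrix_apply, smul_eq_mul]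
    rw [Real.sqrt_div (by positivity)]
    ring
  have hsm' : Measurable (suoOfHaar hmn hkn) := by
    refine meas_matrix _ fun i j => ?_
    simp only [suoOfHaar, Matrix.smul_apply, Matrix.submatrix_apply, smul_eq_mul]
    exact (meas_entry _ _).const_mul _
  have hker : Measurable (fun W : Matrix (Fin m) (Fin k) ℝ => kernelF φ W z z') := by
    simp only [kernelF]
    refine Measurable.div_const (Finset.measurable_sum _ fun i _ => ?_) _
    exact (hφm.comp (meas_mulVec z i)).mul (hφm.comp (meas_mulVec z' i))
  have hP := hμ.1
  have hE : ∫ W, kernelF φ W z z' ∂(μ.map (suoOfHaar hmn hkn)) = 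
      ∫ q : (ℝ × ℝ) × (Fin N → ℝ),
        φ (√((N+2 : ℕ) : ℝ) * (q.1.1 / √(q.1.1 ^ 2 + q.1.2 ^ 2 + ∑ j, q.2 j ^ 2))) *
        φ (√((N+2 : ℕ) : ℝ) * ((ρ * q.1.1 + σ * q.1.2) / √(q.1.1 ^ 2 + q.1.2 ^ 2 + ∑ j, q.2 j ^ 2)))
        ∂(((gaussianReal 0 1).prod (gaussianReal 0 1)).prod (Measure.pi (fun _ : Fin N => gaussianReal 0 1))) := by
    rw [integral_map hsm'.aemeasurable hker.aestronglyMeasurable]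
    simp only [kernelF, hmv]
    rw [integral_div, integral_finsetSum]
    · rw [Finset.sum_congr rfl fun i _ =>
        haar_row N μ hμ v w ρ σ ((N+2 : ℕ) : ℝ) C hvv hww hvw hρσ φ hφm hφ (Fin.castLE hmn i)]
      rw [Finset.sum_const, Finset.card_univ, Fintype.card_fin, nsmul_eq_mul, mul_div_cancel_left₀ _ hm0.ne']
    · intro i _
      refine bdd_integrable _ _ ?_ (C * C) fun M => ?_
      · exact (hφm.comp ((meas_mulVec v _).const_mul _)).mul (hφm.comp ((meas_mulVec w _).const_mul _))
      · rw [abs_mul]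
        exact mul_le_mul (hφ _) (hφ _) (abs_nonneg _) hC
  rw [hE, hA]
  have hs2 : (1:ℝ) ≤ √2 := Real.one_le_sqrt.2 (by norm_num)
  rcases Nat.eq_zero_or_pos N with rfl | hN
  · have hb : ∀ x y : ℝ, ‖φ x * φ y‖ ≤ C * C := fun x y => by
      rw [Real.norm_eq_abs, abs_mul]
      exact mul_le_mul (hφ _) (hφ _) (abs_nonneg _) hC
    refine (abs_sub _ _).trans ?_
    refine (add_le_add (norm_integral_le_of_norm_le_const (C := C * C) (Filter.Eventually.of_forall fun q => hb _ _))
      (norm_integral_le_of_norm_le_const (C := C * C) (Filter.Eventually.of_forall fun q => hb _ _))).trans ?_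
    simp only [probReal_univ, mul_one]
    norm_num
    have h1 : 1 ≤ √2 * √(m:ℝ) := one_le_mul_of_one_le_of_one_le hs2 hsm
    have h2 : C ^ 2 * 1 ≤ C ^ 2 * (√2 * √(m:ℝ)) := mul_le_mul_of_nonneg_left h1 (by positivity)
    nlinarith
  · refine (core_gauss N hN.ne' _ (by push_cast; ring) φ hφdiff C hφ hφ' ρ σ hρσ).trans ?_
    refine div_le_div_of_nonneg_right ?_ (by push_cast; linarith [(Nat.cast_nonneg N : (0:ℝ) ≤ N)])
    have : 4 * √2 * C ^ 2 * 1 ≤ 4 * √2 * C ^ 2 * √(m:ℝ) := mul_le_mul_of_nonneg_left hsm (by positivity)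
    nlinarith


end

/-- **Proposition.** For SUO-distributed `W`, `φ` with `‖φ‖_∞, ‖φ'‖_∞ ≤ C`, and inputs
with `‖z‖² = ‖z'‖² = k`, if `n = max k m ≥ 2` then
`|E[κ_f(z,z')] - κ̃_f(Σ_{z,z'})| ≤ 4√2 √m C²/(n-1)`. -/
theorem suo_mean_kernel_approx (m k : ℕ) (hm : 0 < m) (hk : 0 < k)
    (hn : 2 ≤ max k m)
    (ν : Measure (Matrix (Fin m) (Fin k) ℝ)) (hν : IsSUO m k ν)
    (φ : ℝ → ℝ) (C : ℝ) (hφdiff : Differentiable ℝ φ)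
    (hφ : ∀ x, |φ x| ≤ C) (hφ' : ∀ x, |deriv φ x| ≤ C)
    (z z' : Fin k → ℝ) (hz : z ⬝ᵥ z = (k : ℝ)) (hz' : z' ⬝ᵥ z' = (k : ℝ)) :
    |(∫ W, kernelF φ W z z' ∂ν) - approxKernel φ (covMat z z')| ≤
      4 * Real.sqrt 2 * Real.sqrt m * C ^ 2 / (((max k m : ℕ) : ℝ) - 1) := by
  obtain ⟨μ, hμ, rfl⟩ := hν
  exact main_n (max k m) m k hm hk hn (le_max_right k m) (le_max_left k m) μ hμ φ C hφdiff hφ hφ' z z' hz hz'
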